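/- Let A ∈ {0,1}^{n×n} be a random symmetric adjacency matrix with zero diagonal such that A_{uv} ~ Bernoulli(P_{uv}) independently for all u > v, where P ∈ [0,1]^{n×n} is symmetric, and set p_max = max over u ≥ v of P_{uv}. There exist universal constants C > 0 (sufficiently large) and C' > 0 such that for any τ > C·(1 + n·p_max), with probability at least 1 − e^{−C'·n}, the number of nodes with degree at least τ satisfies #{u ∈ [n] : d_u ≥ τ} ≤ n/τ. -/

import Mathlib

open scoped BigOperators
open Filter

namespace SBM

noncomputable section

/-- Adjacency matrices of graphs on `n` nodes. -/
abbrev Adj (n : ℕ) := Fin n → Fin n → Bool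

/-- 0/1 real value of an entry of the adjacency matrix. -/
def aVal {n : ℕ} (A : Adj n) (u v : Fin n) : ℝ := if A u v then 1 else 0

/-- Probability weight of one adjacency matrix under the SBM with edge
probability matrix `P`: the entries above the diagonal are independent
Bernoulli, the matrix is symmetric with zero diagonal. -/
def weight {n : ℕ} (P : Matrix (Fin n) (Fin n) ℝ) (A : Adj n) : ℝ :=
  if (∀ u, A u u = false) ∧ (∀ u v, A u v = A v u) then
    ∏ u : Fin n, ∏ v : Fin n,
      if u < v then (if A u v then P u v else 1 - P u v) else 1
  else 0

/-- Probability of a set of adjacency matrices under the SBM with edge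
probability matrix `P`. -/
def prob {n : ℕ} (P : Matrix (Fin n) (Fin n) ℝ) (S : Set (Adj n)) : ℝ :=
  ∑ A : Adj n, S.indicator (weight P) A

/-- The edge probability matrix `P u v = B (σ u) (σ v)`. -/
def pMat {n k : ℕ} (B : Matrix (Fin k) (Fin k) ℝ) (σ : Fin n → Fin k) :
    Matrix (Fin n) (Fin n) ℝ := fun u v => B (σ u) (σ v)

/-- Size of the `i`-th community of a label assignment. -/
def comSize {n k : ℕ} (σ : Fin n → Fin k) (i : Fin k) : ℝ :=
  ((Finset.univ.filter fun u => σ u = i).card : ℝ)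

/-- Hamming loss `ℓ0`. -/
def l0 {n k : ℕ} (σ1 σ2 : Fin n → Fin k) : ℝ :=
  ((Finset.univ.filter fun u => σ1 u ≠ σ2 u).card : ℝ) / n

/-- Misclassification proportion: minimum of `ℓ0` over relabelings. -/
def misclass {n k : ℕ} (σh σ : Fin n → Fin k) : ℝ :=
  ⨅ π : Equiv.Perm (Fin k), l0 σh (fun u => π (σ u))

/-- Euclidean norm of a vector. -/
def sqnorm {n : ℕ} (x : Fin n → ℝ) : ℝ := Real.sqrt (∑ i, x i ^ 2)

/-- Operator (spectral) norm of a square matrix. -/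
def opNorm {n : ℕ} (M : Matrix (Fin n) (Fin n) ℝ) : ℝ :=
  sSup { t : ℝ | ∃ x : Fin n → ℝ, sqnorm x = 1 ∧ t = sqnorm (M.mulVec x) }

/-- The `k`-th largest singular value of a square matrix, via the
Courant–Fischer max-min characterization. -/
def kthSingular {n : ℕ} (M : Matrix (Fin n) (Fin n) ℝ) (k : ℕ) : ℝ :=
  sSup { t : ℝ | 0 ≤ t ∧ ∃ V : Submodule ℝ (Fin n → ℝ),
    Module.finrank ℝ V = k ∧ ∀ x ∈ V, t * sqnorm x ≤ sqnorm (M.mulVec x) }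

/-- The Rényi divergence of order 1/2, `I*`. -/
def renyiHalf (n : ℕ) (a b : ℝ) : ℝ :=
  -2 * Real.log (Real.sqrt ((a / n) * (b / n)) +
    Real.sqrt ((1 - a / n) * (1 - b / n)))

/-- The balanced parameter space `Θ₀(n,k,a,b,β)`. -/
def Theta0 (n k : ℕ) (a b β : ℝ) :
    Set (Matrix (Fin k) (Fin k) ℝ × (Fin n → Fin k)) :=
  { p | (∀ i, (n : ℝ) / (β * k) - 1 ≤ comSize p.2 i ∧
          comSize p.2 i ≤ β * n / k + 1) ∧
        (∀ i, p.1 i i = a / n) ∧ ∀ i j, i ≠ j → p.1 i j = b / n }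

/-- Average of the off-diagonal entries of a `k × k` matrix. -/
def offDiagAvg {k : ℕ} (B : Matrix (Fin k) (Fin k) ℝ) : ℝ :=
  (1 / ((k : ℝ) * ((k : ℝ) - 1))) *
    ∑ i : Fin k, ∑ j : Fin k, if i ≠ j then B i j else 0

/-- The general parameter space `Θ(n,k,a,b,λ,β;α)`. -/
def ThetaGen (n k : ℕ) (a b lam β α : ℝ) :
    Set (Matrix (Fin k) (Fin k) ℝ × (Fin n → Fin k)) :=
  { p | (∀ i, (n : ℝ) / (β * k) - 1 ≤ comSize p.2 i ∧
          comSize p.2 i ≤ β * n / k + 1) ∧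
        (∀ i j, p.1 i j = p.1 j i) ∧
        (∀ i j, 0 ≤ p.1 i j ∧ p.1 i j ≤ 1) ∧
        b / (α * n) ≤ offDiagAvg p.1 ∧
        (∀ i j, i ≠ j → p.1 i j ≤ b / n) ∧
        (∃ i j, i ≠ j ∧ p.1 i j = b / n) ∧
        (∀ i, a / n ≤ p.1 i i) ∧ (∃ i, p.1 i i = a / n) ∧
        (∀ i, p.1 i i ≤ α * a / n) ∧
        lam ≤ kthSingular (pMat p.1 p.2) k }

/-- The estimated community `C̃ᵢᵘ` (node `u` itself is excluded). -/
def cluster {n k : ℕ} (u : Fin n) (s : Fin n → Fin k) (i : Fin k) :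
    Finset (Fin n) :=
  Finset.univ.filter fun v => v ≠ u ∧ s v = i

/-- Number of edges within a set of nodes. -/
def edgesWithin {n : ℕ} (A : Adj n) (C : Finset (Fin n)) : ℝ :=
  (∑ v ∈ C, ∑ w ∈ C, aVal A v w) / 2

/-- Number of edges between two disjoint sets of nodes. -/
def edgesBetween {n : ℕ} (A : Adj n) (C D : Finset (Fin n)) : ℝ :=
  ∑ v ∈ C, ∑ w ∈ D, aVal A v w

/-- The connectivity estimates `B̂ᵢⱼᵘ` of Algorithm 1, based on the initial
assignment `s = σ⁰ᵤ`. -/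
def hatB {n k : ℕ} (A : Adj n) (u : Fin n) (s : Fin n → Fin k) (i j : Fin k) :
    ℝ :=
  if i = j then
    edgesWithin A (cluster u s i) /
      (((cluster u s i).card : ℝ) * (((cluster u s i).card : ℝ) - 1) / 2)
  else
    edgesBetween A (cluster u s i) (cluster u s j) /
      (((cluster u s i).card : ℝ) * ((cluster u s j).card : ℝ))

/-- `â_u = n · minᵢ B̂ᵢᵢᵘ`. -/
def hata {n k : ℕ} (A : Adj n) (u : Fin n) (s : Fin n → Fin k) : ℝ :=
  n * ⨅ i : Fin k, hatB A u s i i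

/-- `b̂_u = n · maxᵢ≠ⱼ B̂ᵢⱼᵘ`. -/
def hatb {n k : ℕ} (A : Adj n) (u : Fin n) (s : Fin n → Fin k) : ℝ :=
  n * sSup { x : ℝ | ∃ i j : Fin k, i ≠ j ∧ x = hatB A u s i j }

/-- `t = ½ log (â (1 − b̂/n) / (b̂ (1 − â/n)))`. -/
def tStat (n : ℕ) (ha hb : ℝ) : ℝ :=
  Real.log (ha * (1 - hb / n) / (hb * (1 - ha / n))) / 2

/-- `ρ = −(1/(2t)) log (((â/n)e^{−t} + 1 − â/n)/((b̂/n)e^{t} + 1 − b̂/n))`. -/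
def rhoStat (n : ℕ) (ha hb t : ℝ) : ℝ :=
  -(Real.log (((ha / n) * Real.exp (-t) + 1 - ha / n) /
      ((hb / n) * Real.exp t + 1 - hb / n))) / (2 * t)

/-- Penalized vote of node `u` for label `l`. -/
def vote {n k : ℕ} (A : Adj n) (u : Fin n) (s : Fin n → Fin k) (ρ : ℝ)
    (l : Fin k) : ℝ :=
  (∑ v ∈ cluster u s l, aVal A u v) - ρ * ((cluster u s l).card : ℝ)

/-- `lbl` maximizes the penalized vote of node `u`. -/
def VoteMax {n k : ℕ} (A : Adj n) (u : Fin n) (s : Fin n → Fin k) (ρ : ℝ)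
    (lbl : Fin k) : Prop :=
  ∀ l : Fin k, vote A u s ρ l ≤ vote A u s ρ lbl

/-- `|{v : σU_{u1}(v) = l} ∩ {v : σU_u(v) = σU_u(u)}|`. -/
def consensusCount {n k : ℕ} (σU : Fin n → Fin n → Fin k) (u1 u : Fin n)
    (l : Fin k) : ℕ :=
  (Finset.univ.filter fun v => σU u1 v = l ∧ σU u v = σU u u).card

/-- Specification of the refinement-plus-consensus scheme of Algorithm 1, with
an arbitrary family of penalties `ρ`.  `σ0 u` is the initial assignment
`σ⁰ᵤ`, `σU u` is the refined assignment `σ̂ᵤ`, `σhat` is the final output. -/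
def RefineSpec {n k : ℕ} (A : Adj n) (σ0 σU : Fin n → Fin n → Fin k)
    (ρ : Fin n → ℝ) (σhat : Fin n → Fin k) : Prop :=
  (∀ u v, v ≠ u → σU u v = σ0 u v) ∧
  (∀ u, VoteMax A u (σ0 u) (ρ u) (σU u u)) ∧
  ∀ hn : 0 < n,
    σhat ⟨0, hn⟩ = σU ⟨0, hn⟩ ⟨0, hn⟩ ∧
    ∀ u, u ≠ ⟨0, hn⟩ →
      ∀ l : Fin k, consensusCount σU ⟨0, hn⟩ u l ≤
        consensusCount σU ⟨0, hn⟩ u (σhat u)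

/-- Algorithm 1 with the standard data-driven penalties. -/
def AlgorithmOne {n k : ℕ} (A : Adj n) (σ0 σU : Fin n → Fin n → Fin k)
    (σhat : Fin n → Fin k) : Prop :=
  RefineSpec A σ0 σU
    (fun u => rhoStat n (hata A u (σ0 u)) (hatb A u (σ0 u))
      (tStat n (hata A u (σ0 u)) (hatb A u (σ0 u)))) σhat

/-- Algorithm 1 with the truncated `t_u` (truncation level `log (2/ε0)`). -/
def AlgorithmOneTrunc (ε0 : ℝ) {n k : ℕ} (A : Adj n)
    (σ0 σU : Fin n → Fin n → Fin k) (σhat : Fin n → Fin k) : Prop :=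
  RefineSpec A σ0 σU
    (fun u => rhoStat n (hata A u (σ0 u)) (hatb A u (σ0 u))
      (min (tStat n (hata A u (σ0 u)) (hatb A u (σ0 u)))
        (Real.log (2 / ε0)))) σhat

/-- Algorithm 1 with known `a` and `b`. -/
def AlgorithmOneKnown (a b : ℝ) {n k : ℕ} (A : Adj n)
    (σ0 σU : Fin n → Fin n → Fin k) (σhat : Fin n → Fin k) : Prop :=
  RefineSpec A σ0 σU (fun _ => rhoStat n a b (tStat n a b)) σhat

/-- Algorithm 1 with known `a`, `b` and truncated `t_u`. -/
def AlgorithmOneKnownTrunc (a b ε0 : ℝ) {n k : ℕ} (A : Adj n)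
    (σ0 σU : Fin n → Fin n → Fin k) (σhat : Fin n → Fin k) : Prop :=
  RefineSpec A σ0 σU
    (fun _ => rhoStat n a b (min (tStat n a b) (Real.log (2 / ε0)))) σhat

/-- The initializer `σ0 A u` (that is, `σ⁰ᵤ`) only uses the data `A₋ᵤ`. -/
def LocalInit {n k : ℕ} (σ0 : Adj n → Fin n → Fin n → Fin k) : Prop :=
  ∀ (A A' : Adj n) (u : Fin n),
    (∀ v w, v ≠ u → w ≠ u → A v w = A' v w) → σ0 A u = σ0 A' u

/-- Condition 1: the initializer is, with probability at least
`1 − C0 n^{−(1+δ)}`, within misclassification proportion `γ` of the truth,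
uniformly over the parameter space and the left-out node. -/
def Condition1 {n k : ℕ}
    (Θ : Set (Matrix (Fin k) (Fin k) ℝ × (Fin n → Fin k)))
    (σ0 : Adj n → Fin n → Fin n → Fin k) (C0 δ γ : ℝ) : Prop :=
  ∀ p ∈ Θ, ∀ u : Fin n,
    1 - C0 * (n : ℝ) ^ (-(1 + δ)) ≤
      prob (pMat p.1 p.2) { A | misclass p.2 (σ0 A u) ≤ γ }

/-- Degree of a node. -/
def degree {n : ℕ} (A : Adj n) (u : Fin n) : ℝ := ∑ v, aVal A u v

/-- Average degree `d̄`. -/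
def avgDeg {n : ℕ} (A : Adj n) : ℝ := (∑ u, degree A u) / n

/-- Trimming operator `T_τ`: zero out rows/columns of high-degree nodes. -/
def trim {n : ℕ} (A : Adj n) (τ : ℝ) : Matrix (Fin n) (Fin n) ℝ :=
  fun u v => if τ ≤ degree A u ∨ τ ≤ degree A v then 0 else aVal A u v

/-- Regularized adjacency matrix `A_τ = A + (τ/n)·11ᵀ`. -/
def addReg {n : ℕ} (A : Adj n) (τ : ℝ) : Matrix (Fin n) (Fin n) ℝ :=
  fun u v => aVal A u v + τ / n

/-- Normalized Laplacian `L(M)_{uv} = M_{uv}/√(r_u r_v)`. -/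
def lap {n : ℕ} (M : Matrix (Fin n) (Fin n) ℝ) : Matrix (Fin n) (Fin n) ℝ :=
  fun u v => M u v / Real.sqrt ((∑ w, M u w) * (∑ w, M v w))

/-- `U` is a matrix whose columns are orthonormal eigenvectors of `M`
corresponding to the `k` leading (largest in absolute value) eigenvalues. -/
def LeadingEigenvectors {n k : ℕ} (M : Matrix (Fin n) (Fin n) ℝ)
    (U : Matrix (Fin n) (Fin k) ℝ) : Prop :=
  ∃ μ : Fin k → ℝ,
    (∀ i j : Fin k, (∑ u, U u i * U u j) = if i = j then (1 : ℝ) else 0) ∧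
    (∀ j : Fin k, M.mulVec (fun u => U u j) = fun u => μ j * U u j) ∧
    ∀ (x : Fin n → ℝ) (c : ℝ), M.mulVec x = (fun u => c * x u) →
      (∀ j, (∑ u, x u * U u j) = 0) → x ≠ 0 → ∀ j, |c| ≤ |μ j|

/-- Distance between two rows of `U`. -/
def rowDist {n k : ℕ} (U : Matrix (Fin n) (Fin k) ℝ) (v w : Fin n) : ℝ :=
  Real.sqrt (∑ j, (U v j - U w j) ^ 2)

/-- Number of points of `S` within distance `r` of `v`. -/
def ballCount {n k : ℕ} (U : Matrix (Fin n) (Fin k) ℝ) (r : ℝ)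
    (S : Finset (Fin n)) (v : Fin n) : ℕ :=
  (S.filter fun w => rowDist U w v < r).card

/-- Specification of the greedy clustering scheme (Algorithm 2) with critical
radius `r`, applied to the rows of `U`. -/
def GreedyCluster {n k : ℕ} (U : Matrix (Fin n) (Fin k) ℝ) (r : ℝ)
    (σhat : Fin n → Fin k) : Prop :=
  ∃ (S : ℕ → Finset (Fin n)) (t : Fin k → Fin n) (Ch : Fin k → Finset (Fin n)),
    S 0 = Finset.univ ∧
    (∀ i : Fin k,
      ((S i.val).Nonempty → t i ∈ S i.val ∧
        ∀ v ∈ S i.val,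
          ballCount U r (S i.val) v ≤ ballCount U r (S i.val) (t i)) ∧
      Ch i = (S i.val).filter (fun v => rowDist U v (t i) < r) ∧
      S (i.val + 1) = S i.val \ Ch i) ∧
    (∀ i : Fin k, ∀ u ∈ Ch i, σhat u = i) ∧
    ∀ u ∈ S k, ∀ j : Fin k,
      (∑ v ∈ Ch (σhat u), rowDist U u v) / ((Ch (σhat u)).card : ℝ) ≤
        (∑ v ∈ Ch j, rowDist U u v) / ((Ch j).card : ℝ)

/-- `σhat` is a possible output of `USC(τ)` (with tuning constant `μ`). -/
def USCOutput {n k : ℕ} (A : Adj n) (τ μ : ℝ) (σhat : Fin n → Fin k) : Prop :=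
  ∃ U : Matrix (Fin n) (Fin k) ℝ,
    LeadingEigenvectors (trim A τ) U ∧
    GreedyCluster U (μ * Real.sqrt ((k : ℝ) / n)) σhat

/-- `σhat` is a possible output of `NSC(τ)` (with tuning constant `μ`). -/
def NSCOutput {n k : ℕ} (A : Adj n) (τ μ : ℝ) (σhat : Fin n → Fin k) : Prop :=
  ∃ U : Matrix (Fin n) (Fin k) ℝ,
    LeadingEigenvectors (lap (addReg A τ)) U ∧
    GreedyCluster U (μ * Real.sqrt ((k : ℝ) / n)) σhat

/-- The initializer `σ0 A u` is obtained by applying `USC(Cτ · d̄)` to the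
leave-one-out matrix `A₋ᵤ` (identified with a graph on `n − 1` nodes via an
injection `e` avoiding `u`). -/
def USCInitDeg {n k : ℕ} (Cτ μ : ℝ) (σ0 : Adj n → Fin n → Fin n → Fin k) :
    Prop :=
  ∀ (A : Adj n) (u : Fin n), ∃ (m : ℕ) (e : Fin m → Fin n) (s' : Fin m → Fin k),
    m + 1 = n ∧ Function.Injective e ∧ (∀ w, e w ≠ u) ∧
    USCOutput (fun v w => A (e v) (e w))
      (Cτ * avgDeg (fun v w => A (e v) (e w))) μ s' ∧
    ∀ w, σ0 A u (e w) = s' w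

/-- The initializer `σ0 A u` is obtained by applying `NSC(Cτ · d̄)` to `A₋ᵤ`. -/
def NSCInitDeg {n k : ℕ} (Cτ μ : ℝ) (σ0 : Adj n → Fin n → Fin n → Fin k) :
    Prop :=
  ∀ (A : Adj n) (u : Fin n), ∃ (m : ℕ) (e : Fin m → Fin n) (s' : Fin m → Fin k),
    m + 1 = n ∧ Function.Injective e ∧ (∀ w, e w ≠ u) ∧
    NSCOutput (fun v w => A (e v) (e w))
      (Cτ * avgDeg (fun v w => A (e v) (e w))) μ s' ∧
    ∀ w, σ0 A u (e w) = s' w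

/-- The initializer `σ0 A u` is obtained by applying `USC(τ)` (with a fixed
regularization level `τ`) to `A₋ᵤ`. -/
def USCInitTau {n k : ℕ} (τ μ : ℝ) (σ0 : Adj n → Fin n → Fin n → Fin k) :
    Prop :=
  ∀ (A : Adj n) (u : Fin n), ∃ (m : ℕ) (e : Fin m → Fin n) (s' : Fin m → Fin k),
    m + 1 = n ∧ Function.Injective e ∧ (∀ w, e w ≠ u) ∧
    USCOutput (fun v w => A (e v) (e w)) τ μ s' ∧
    ∀ w, σ0 A u (e w) = s' w

/-- The initializer `σ0 A u` is obtained by applying `NSC(τ)` (with a fixed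
regularization level `τ`) to `A₋ᵤ`. -/
def NSCInitTau {n k : ℕ} (τ μ : ℝ) (σ0 : Adj n → Fin n → Fin n → Fin k) :
    Prop :=
  ∀ (A : Adj n) (u : Fin n), ∃ (m : ℕ) (e : Fin m → Fin n) (s' : Fin m → Fin k),
    m + 1 = n ∧ Function.Injective e ∧ (∀ w, e w ≠ u) ∧
    NSCOutput (fun v w => A (e v) (e w)) τ μ s' ∧
    ∀ w, σ0 A u (e w) = s' w

/-- The minimax-rate threshold `exp(−(1−coef)·n·I*/2)` for `k = 2` and
`exp(−(1−coef)·n·I*/(βk))` for `k ≥ 3`. -/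
def rate (β : ℝ) (n k : ℕ) (a b coef : ℝ) : ℝ :=
  if k = 2 then Real.exp (-((1 - coef) * ((n : ℝ) * renyiHalf n a b)) / 2)
  else Real.exp (-((1 - coef) * ((n : ℝ) * renyiHalf n a b)) / (β * k))

/-- `sup_{(B,σ)∈Θ₀} P{ℓ(σ,σ̂) ≥ rate} → 0` as `n → ∞`. -/
def SupSmall0 (β : ℝ) (k : ℕ → ℕ) (a b coef : ℕ → ℝ)
    (σhat : ∀ n, Adj n → Fin n → Fin (k n)) : Prop :=
  ∀ ε' : ℝ, 0 < ε' → ∀ᶠ n in atTop,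
    ∀ p ∈ Theta0 n (k n) (a n) (b n) β,
      prob (pMat p.1 p.2)
        { A | rate β n (k n) (a n) (b n) (coef n) ≤ misclass (σhat n A) p.2 }
        ≤ ε'

/-- `sup_{(B,σ)∈Θ} P{ℓ(σ,σ̂) ≥ rate} → 0` as `n → ∞`. -/
def SupSmallGen (β α : ℝ) (k : ℕ → ℕ) (a b lam coef : ℕ → ℝ)
    (σhat : ∀ n, Adj n → Fin n → Fin (k n)) : Prop :=
  ∀ ε' : ℝ, 0 < ε' → ∀ᶠ n in atTop,
    ∀ p ∈ ThetaGen n (k n) (a n) (b n) (lam n) β α,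
      prob (pMat p.1 p.2)
        { A | rate β n (k n) (a n) (b n) (coef n) ≤ misclass (σhat n A) p.2 }
        ≤ ε'

/-- The running assumption `0 < b < a ≤ (1−ε) n`. -/
def Baseline (ε : ℝ) (n : ℕ) (a b : ℝ) : Prop :=
  0 < b ∧ b < a ∧ a ≤ (1 - ε) * n

/-- `a ≍ b`. -/
def Comparable (a b : ℕ → ℝ) : Prop :=
  ∃ c1 c2 : ℝ, 0 < c1 ∧ ∀ n, c1 * b n ≤ a n ∧ a n ≤ c2 * b n

/-- The constant `C_ε`. -/
def Ceps (ε : ℝ) : ℝ := (10 / 3) * ((2 - ε) / ((ε / 2) * Real.log (2 / ε)))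

/-- The constant `c_ε`. -/
def ceps (ε : ℝ) : ℝ := min (1 / (10 * Ceps ε)) (ε / (2 - ε))

/-- The maximal entry `p_max` of a matrix. -/
def pmax {n : ℕ} (P : Matrix (Fin n) (Fin n) ℝ) : ℝ :=
  sSup { x : ℝ | ∃ u v, x = P u v }

/-- The matrix agreeing with `M` on `J × J` and zero elsewhere. -/
def restrictM {n : ℕ} (M : Matrix (Fin n) (Fin n) ℝ) (J : Finset (Fin n)) :
    Matrix (Fin n) (Fin n) ℝ :=
  fun u v => if u ∈ J ∧ v ∈ J then M u v else 0

/-- The real-valued adjacency matrix. -/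
def adjMat {n : ℕ} (A : Adj n) : Matrix (Fin n) (Fin n) ℝ := fun u v => aVal A u v

end

end SBM

namespace SBM

open Filter

/-!
If more than `n / τ` nodes have degree at least `τ`, then some set `T` of `m = ⌊n / τ⌋ + 1` nodes
has total degree at least `m τ`. Exponential Markov and a union bound over `T` control this event.
The degrees of the nodes of `T` are dependent, but their sum is a sum over independent potential
edges, each counted at most twice; hence its exponential moment is at most
`exp (e² n p_max m)`. There are at most `τ ^ m * exp (n / τ)` sets `T`, so the union bound is
exponentially small in `m τ ≥ n` once `τ` dominates `n p_max`, `log τ` and a constant.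
-/

/-- The pairs `(u, v)` with `u < v`: the positions strictly above the diagonal of an
`ι × ι` array, that is, the potential edges of a graph on `ι`. -/
abbrev UpperPair (ι : Type*) [LT ι] := {e : ι × ι // e.1 < e.2}

section UpperPair

variable {ι : Type*} [LinearOrder ι]

@[to_additive]
theorem prod_upperPair {M : Type*} [CommMonoid M] [Fintype ι] (f : ι → ι → M) :
    ∏ e : UpperPair ι, f e.1.1 e.1.2 = ∏ u, ∏ v, if u < v then f u v else 1 := by
  rw [← Fintype.prod_prod_type', ← Finset.prod_filter]
  exact (Finset.prod_subtype _ (by simp) fun e : ι × ι => f e.1 e.2).symm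

theorem sum_upperPair_add_swap {M : Type*} [AddCommMonoid M] [Fintype ι] (f : ι → ι → M) :
    ∑ e : UpperPair ι, (f e.1.1 e.1.2 + f e.1.2 e.1.1) = ∑ u, ∑ v ∈ {u}ᶜ, f u v := by
  have hrow : ∀ u, ∑ v ∈ {u}ᶜ, f u v =
      (∑ v, if u < v then f u v else 0) + ∑ v, if v < u then f u v else 0 := fun u => by
    have hoff : ({u}ᶜ : Finset ι) = ({v | u < v} : Finset ι) ∪ ({v | v < u} : Finset ι) := by
      ext v
      simpa using ne_comm.trans (lt_or_lt_iff_ne (a := u) (b := v)).symm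
    rw [hoff, Finset.sum_union (Finset.disjoint_filter.2 fun _ _ => lt_asymm),
      Finset.sum_filter, Finset.sum_filter]
  rw [Finset.sum_add_distrib, sum_upperPair, sum_upperPair fun u v => f v u]
  simp only [hrow, Finset.sum_add_distrib]
  rw [Finset.sum_comm (f := fun u v => if v < u then f u v else 0)]

theorem sum_upperPair_add_le_card_mul_sum {R : Type*} [Semiring R] [PartialOrder R]
    [IsOrderedRing R] [Fintype ι] {s : ι → R} (hs : ∀ u, 0 ≤ s u) :
    ∑ e : UpperPair ι, (s e.1.1 + s e.1.2) ≤ Fintype.card ι * ∑ u, s u := by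
  rw [sum_upperPair_add_swap fun u _ => s u, Finset.mul_sum]
  refine Finset.sum_le_sum fun u _ => ?_
  rw [Finset.sum_const, nsmul_eq_mul]
  gcongr
  · exact hs u
  · exact Finset.card_le_univ _

/-- The symmetric array with diagonal `a` and entries `x` above the diagonal. For `a = false` it is
the adjacency matrix of the graph with edge indicators `x`. -/
def symmExtend {α : Type*} (a : α) (x : UpperPair ι → α) : ι → ι → α := fun u v =>
  if h : u < v then x ⟨(u, v), h⟩ else if h : v < u then x ⟨(v, u), h⟩ else a

variable {α : Type*} (a : α) (x : UpperPair ι → α)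

@[simp]
theorem symmExtend_upperPair (e : UpperPair ι) : symmExtend a x e.1.1 e.1.2 = x e := by
  simp [symmExtend, e.2]

@[simp]
theorem symmExtend_self (u : ι) : symmExtend a x u u = a := by
  simp [symmExtend]

theorem symmExtend_comm (u v : ι) : symmExtend a x u v = symmExtend a x v u := by
  rcases lt_trichotomy u v with h | rfl | h
  · simp [symmExtend, h, h.not_gt]
  · rfl
  · simp [symmExtend, h, h.not_gt]

theorem symmExtend_injective : Function.Injective (symmExtend (ι := ι) a) := fun x y h => by
  funext e
  rw [← symmExtend_upperPair a x, h, symmExtend_upperPair]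

theorem symmExtend_restrict {a : α} {A : ι → ι → α} (hdiag : ∀ u, A u u = a)
    (hsymm : ∀ u v, A u v = A v u) : symmExtend a (fun e => A e.1.1 e.1.2) = A := by
  funext u v
  rcases lt_trichotomy u v with h | rfl | h
  · simp [symmExtend, h]
  · simp [hdiag]
  · simp [symmExtend, h, h.not_gt, hsymm u v]

end UpperPair

section Expectation

variable {n : ℕ} {P : Matrix (Fin n) (Fin n) ℝ}

/-- The expected value of `f` under the law `weight P` on adjacency matrices. -/
noncomputable def expectation (P : Matrix (Fin n) (Fin n) ℝ) (f : Adj n → ℝ) : ℝ :=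
  ∑ A, weight P A * f A

theorem weight_symmExtend (P : Matrix (Fin n) (Fin n) ℝ) (x : UpperPair (Fin n) → Bool) :
    weight P (symmExtend false x) =
      ∏ e, if x e then P e.1.1 e.1.2 else 1 - P e.1.1 e.1.2 := by
  rw [weight, if_pos ⟨symmExtend_self false x, symmExtend_comm false x⟩, ← prod_upperPair
    fun u v => if symmExtend false x u v then P u v else 1 - P u v]
  simp only [symmExtend_upperPair]

theorem expectation_eq_sum_upperPair (P : Matrix (Fin n) (Fin n) ℝ) (f : Adj n → ℝ) :
    expectation P f = ∑ x : UpperPair (Fin n) → Bool,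
      (∏ e, if x e then P e.1.1 e.1.2 else 1 - P e.1.1 e.1.2) * f (symmExtend false x) := by
  refine (Finset.sum_of_injOn (symmExtend false) (symmExtend_injective false).injOn (by simp)
    (fun A _ hA => ?_) fun x _ => by rw [weight_symmExtend]).symm
  rw [weight, if_neg, zero_mul]
  rintro ⟨hdiag, hsymm⟩
  exact hA ⟨_, by simp, symmExtend_restrict hdiag hsymm⟩

theorem sum_mul_degree_symmExtend (s : Fin n → ℝ) (x : UpperPair (Fin n) → Bool) :
    ∑ u, s u * degree (symmExtend false x) u =
      ∑ e : UpperPair (Fin n), if x e then s e.1.1 + s e.1.2 else 0 := by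
  set A : Adj n := symmExtend false x
  have hdegree : ∀ u, s u * degree A u = ∑ v ∈ {u}ᶜ, s u * aVal A u v := fun u => by
    rw [degree, Finset.mul_sum]
    refine (Finset.sum_subset (Finset.subset_univ _) fun v _ hv => ?_).symm
    obtain rfl : v = u := by simpa using hv
    simp [A, aVal]
  simp only [hdegree]
  rw [← sum_upperPair_add_swap fun u v => s u * aVal A u v]
  refine Finset.sum_congr rfl fun e _ => ?_
  simp [A, aVal, symmExtend_comm false x e.1.2, ite_add_ite]

theorem expectation_exp_sum_mul_degree (P : Matrix (Fin n) (Fin n) ℝ) (s : Fin n → ℝ) :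
    expectation P (fun A => Real.exp (∑ u, s u * degree A u)) =
      ∏ e : UpperPair (Fin n),
        (P e.1.1 e.1.2 * Real.exp (s e.1.1 + s e.1.2) + (1 - P e.1.1 e.1.2)) := by
  have hfactor : ∀ e : UpperPair (Fin n),
      P e.1.1 e.1.2 * Real.exp (s e.1.1 + s e.1.2) + (1 - P e.1.1 e.1.2) =
        ∑ b : Bool, (if b then P e.1.1 e.1.2 else 1 - P e.1.1 e.1.2) *
          Real.exp (if b then s e.1.1 + s e.1.2 else 0) := by
    simp
  simp only [expectation_eq_sum_upperPair, sum_mul_degree_symmExtend]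
  simp only [hfactor, Fintype.prod_sum, Real.exp_sum, Finset.prod_mul_distrib]

theorem sum_weight (P : Matrix (Fin n) (Fin n) ℝ) : ∑ A, weight P A = 1 := by
  simpa [expectation] using expectation_exp_sum_mul_degree P 0

theorem weight_nonneg (hP : ∀ u v, 0 ≤ P u v ∧ P u v ≤ 1) (A : Adj n) : 0 ≤ weight P A := by
  rw [weight]
  split_ifs
  · refine Finset.prod_nonneg fun u _ => Finset.prod_nonneg fun v _ => ?_
    obtain ⟨h0, h1⟩ := hP u v
    split_ifs <;> linarith
  · rfl

theorem prob_eq_one_sub_prob_compl (P : Matrix (Fin n) (Fin n) ℝ) (S : Set (Adj n)) :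
    prob P S = 1 - prob P Sᶜ := by
  simp only [prob, eq_sub_iff_add_eq, ← Finset.sum_add_distrib,
    Set.indicator_self_add_compl_apply, sum_weight]

theorem prob_le_expectation (hP : ∀ u v, 0 ≤ P u v ∧ P u v ≤ 1) {S : Set (Adj n)}
    {f : Adj n → ℝ} (hf : ∀ A, 0 ≤ f A) (hS : ∀ A ∈ S, 1 ≤ f A) :
    prob P S ≤ expectation P f := by
  refine Finset.sum_le_sum fun A _ => Set.indicator_apply_le' (fun hA => ?_) fun _ => ?_
  · exact le_mul_of_one_le_right (weight_nonneg hP A) (hS A hA)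
  · exact mul_nonneg (weight_nonneg hP A) (hf A)

end Expectation

theorem le_pmax {n : ℕ} (P : Matrix (Fin n) (Fin n) ℝ) (u v : Fin n) : P u v ≤ pmax P := by
  refine le_csSup (((Set.finite_range fun e : Fin n × Fin n => P e.1 e.2).subset ?_).bddAbove)
    ⟨u, v, rfl⟩
  rintro _ ⟨u, v, rfl⟩
  exact ⟨(u, v), rfl⟩

theorem pmax_nonneg {n : ℕ} {P : Matrix (Fin n) (Fin n) ℝ} (hP : ∀ u v, 0 ≤ P u v) :
    0 ≤ pmax P :=
  Real.sSup_nonneg (by rintro _ ⟨u, v, rfl⟩; exact hP u v)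

theorem exp_sub_one_le_mul_exp (x : ℝ) : Real.exp x - 1 ≤ x * Real.exp x := by
  have h : (1 - x) * Real.exp x ≤ Real.exp (-x) * Real.exp x := by
    gcongr
    exact Real.one_sub_le_exp_neg x
  rw [← Real.exp_add, neg_add_cancel, Real.exp_zero] at h
  linarith

theorem bernoulli_mgf_le {q p x c : ℝ} (hq : 0 ≤ q) (hqp : q ≤ p) (hx : 0 ≤ x) (hxc : x ≤ c) :
    q * Real.exp x + (1 - q) ≤ Real.exp (Real.exp c * p * x) :=
  calc q * Real.exp x + (1 - q) = q * (Real.exp x - 1) + 1 := by ring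
    _ ≤ p * (x * Real.exp c) + 1 := by
      have hp : 0 ≤ p := hq.trans hqp
      have hexp0 : 0 ≤ Real.exp x - 1 := sub_nonneg.2 (Real.one_le_exp hx)
      have hexp : Real.exp x - 1 ≤ x * Real.exp c :=
        (exp_sub_one_le_mul_exp x).trans (by gcongr)
      gcongr
    _ = Real.exp c * p * x + 1 := by ring
    _ ≤ Real.exp (Real.exp c * p * x) := Real.add_one_le_exp _

section DegreeTail

variable {n : ℕ} {P : Matrix (Fin n) (Fin n) ℝ}

theorem expectation_exp_sum_mul_degree_le (hP : ∀ u v, 0 ≤ P u v) {s : Fin n → ℝ} {t : ℝ}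
    (hs : ∀ u, 0 ≤ s u ∧ s u ≤ t) :
    expectation P (fun A => Real.exp (∑ u, s u * degree A u)) ≤
      Real.exp (Real.exp (2 * t) * (n * pmax P) * ∑ u, s u) := by
  have hedge : ∀ e : UpperPair (Fin n), 0 ≤ s e.1.1 + s e.1.2 ∧ s e.1.1 + s e.1.2 ≤ 2 * t :=
    fun e => ⟨add_nonneg (hs _).1 (hs _).1, by linarith [(hs e.1.1).2, (hs e.1.2).2]⟩
  have hp := pmax_nonneg hP
  calc expectation P (fun A => Real.exp (∑ u, s u * degree A u))
      = ∏ e : UpperPair (Fin n),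
          (P e.1.1 e.1.2 * Real.exp (s e.1.1 + s e.1.2) + (1 - P e.1.1 e.1.2)) :=
        expectation_exp_sum_mul_degree P s
    _ ≤ ∏ e : UpperPair (Fin n), Real.exp (Real.exp (2 * t) * pmax P * (s e.1.1 + s e.1.2)) := by
        refine Finset.prod_le_prod (fun e _ => ?_) fun e _ =>
          bernoulli_mgf_le (hP _ _) (le_pmax P _ _) (hedge e).1 (hedge e).2
        nlinarith [hP e.1.1 e.1.2, Real.one_le_exp (hedge e).1]
    _ = Real.exp (Real.exp (2 * t) * pmax P * ∑ e : UpperPair (Fin n), (s e.1.1 + s e.1.2)) := by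
        rw [← Real.exp_sum, Finset.mul_sum]
    _ ≤ Real.exp (Real.exp (2 * t) * pmax P * (n * ∑ u, s u)) := by
        gcongr
        simpa using sum_upperPair_add_le_card_mul_sum fun u => (hs u).1
    _ = Real.exp (Real.exp (2 * t) * (n * pmax P) * ∑ u, s u) := by ring_nf

/-- The nodes of degree at least `τ`. -/
noncomputable abbrev highDegree (A : Adj n) (τ : ℝ) : Finset (Fin n) :=
  Finset.univ.filter fun u => τ ≤ degree A u

theorem expectation_exp_sum_degree_sub_le (hP : ∀ u v, 0 ≤ P u v) {t : ℝ} (ht : 0 ≤ t) (τ : ℝ)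
    (T : Finset (Fin n)) :
    expectation P (fun A => Real.exp (t * ∑ u ∈ T, (degree A u - τ))) ≤
      Real.exp (t * T.card * (Real.exp (2 * t) * (n * pmax P) - τ)) := by
  set s : Fin n → ℝ := fun u => if u ∈ T then t else 0 with hs
  have hsplit : ∀ A : Adj n, Real.exp (t * ∑ u ∈ T, (degree A u - τ)) =
      Real.exp (∑ u, s u * degree A u) * Real.exp (-(t * T.card * τ)) := by
    intro A
    have hsum : ∑ u, s u * degree A u = t * ∑ u ∈ T, degree A u := by
      simp [hs, ← Finset.mul_sum]
    rw [← Real.exp_add, hsum, Finset.sum_sub_distrib, Finset.sum_const, nsmul_eq_mul]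
    ring_nf
  have hmgf := expectation_exp_sum_mul_degree_le hP (s := s) (t := t) fun u => by
    simp only [hs]
    split_ifs <;> simp [ht]
  have htotal : ∑ u, s u = t * T.card := by simp [hs, mul_comm]
  calc expectation P (fun A => Real.exp (t * ∑ u ∈ T, (degree A u - τ)))
      = expectation P (fun A => Real.exp (∑ u, s u * degree A u)) *
          Real.exp (-(t * T.card * τ)) := by
        simp only [expectation, hsplit, Finset.sum_mul, mul_assoc]
    _ ≤ Real.exp (Real.exp (2 * t) * (n * pmax P) * ∑ u, s u) * Real.exp (-(t * T.card * τ)) := by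
        gcongr
    _ = Real.exp (t * T.card * (Real.exp (2 * t) * (n * pmax P) - τ)) := by
        rw [htotal, ← Real.exp_add]
        ring_nf

theorem prob_le_card_highDegree_le (hP : ∀ u v, 0 ≤ P u v ∧ P u v ≤ 1) {t : ℝ} (ht : 0 ≤ t)
    (m : ℕ) (τ : ℝ) :
    prob P {A | m ≤ (highDegree A τ).card} ≤
      n.choose m * Real.exp (t * m * (Real.exp (2 * t) * (n * pmax P) - τ)) := by
  have hcover : ∀ A ∈ {A : Adj n | m ≤ (highDegree A τ).card},
      1 ≤ ∑ T ∈ Finset.univ.powersetCard m, Real.exp (t * ∑ u ∈ T, (degree A u - τ)) := by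
    intro A hA
    obtain ⟨T, hT, hcard⟩ := Finset.exists_subset_card_eq hA
    have hexcess : 0 ≤ ∑ u ∈ T, (degree A u - τ) :=
      Finset.sum_nonneg fun u hu => sub_nonneg.2 (Finset.mem_filter.1 (hT hu)).2
    exact (Real.one_le_exp (mul_nonneg ht hexcess)).trans <|
      Finset.single_le_sum (f := fun T => Real.exp (t * ∑ u ∈ T, (degree A u - τ)))
        (fun _ _ => (Real.exp_pos _).le)
        (Finset.mem_powersetCard.2 ⟨Finset.subset_univ T, hcard⟩)
  calc prob P {A | m ≤ (highDegree A τ).card}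
      ≤ expectation P fun A =>
          ∑ T ∈ Finset.univ.powersetCard m, Real.exp (t * ∑ u ∈ T, (degree A u - τ)) :=
        prob_le_expectation hP (fun A => Finset.sum_nonneg fun _ _ => (Real.exp_pos _).le) hcover
    _ = ∑ T ∈ Finset.univ.powersetCard m,
          expectation P fun A => Real.exp (t * ∑ u ∈ T, (degree A u - τ)) := by
        simp only [expectation, Finset.mul_sum]
        exact Finset.sum_comm
    _ ≤ ∑ _ ∈ (Finset.univ : Finset (Fin n)).powersetCard m,
          Real.exp (t * m * (Real.exp (2 * t) * (n * pmax P) - τ)) := by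
        refine Finset.sum_le_sum fun T hT => ?_
        rw [← (Finset.mem_powersetCard.1 hT).2]
        exact expectation_exp_sum_degree_sub_le (fun u v => (hP u v).1) ht τ T
    _ = n.choose m * Real.exp (t * m * (Real.exp (2 * t) * (n * pmax P) - τ)) := by
        simp

end DegreeTail

theorem choose_le_pow_mul_exp_div (n m : ℕ) {τ : ℝ} (hτ : 0 < τ) :
    (n.choose m : ℝ) ≤ τ ^ m * Real.exp (n / τ) :=
  calc (n.choose m : ℝ) ≤ (n : ℝ) ^ m / m.factorial := Nat.choose_le_pow_div m n
    _ = τ ^ m * ((n / τ) ^ m / m.factorial) := by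
      rw [div_pow]
      field_simp
    _ ≤ τ ^ m * Real.exp (n / τ) := by
      gcongr
      exact Real.pow_div_factorial_le_exp _ (by positivity) m

theorem choose_le_exp_mul_div_three {n m : ℕ} {τ : ℝ} (hτ : 24 ≤ τ) (hnm : n ≤ m * τ) :
    (n.choose m : ℝ) ≤ Real.exp (m * τ / 3) := by
  have hτ0 : 0 < τ := by linarith
  have hτexp : τ ≤ Real.exp (τ / 4) := by
    nlinarith [Real.quadratic_le_exp_of_nonneg (x := τ / 4) (by positivity)]
  calc (n.choose m : ℝ) ≤ τ ^ m * Real.exp (n / τ) := choose_le_pow_mul_exp_div n m hτ0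
    _ ≤ Real.exp (τ / 4) ^ m * Real.exp m := by
      gcongr
      rwa [div_le_iff₀ hτ0]
    _ = Real.exp (m * (τ / 4 + 1)) := by
      rw [← Real.exp_nat_mul, ← Real.exp_add, mul_add, mul_one]
    _ ≤ Real.exp (m * τ / 3) := by
      rw [mul_div_assoc]
      gcongr
      linarith

theorem exp_two_le_eight : Real.exp 2 ≤ 8 := by
  have h : Real.exp 2 = Real.exp 1 ^ 2 := by rw [← Real.exp_nat_mul]; norm_num
  nlinarith [Real.exp_one_lt_d9, Real.exp_pos 1]

theorem prob_card_highDegree_gt_le {n : ℕ} {P : Matrix (Fin n) (Fin n) ℝ}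
    (hP : ∀ u v, 0 ≤ P u v ∧ P u v ≤ 1) {τ : ℝ} (hτ : 48 * (1 + n * pmax P) < τ) :
    prob P {A | n / τ < (highDegree A τ).card} ≤ Real.exp (-(1 / 2) * n) := by
  have hmean : 0 ≤ n * pmax P := mul_nonneg n.cast_nonneg (pmax_nonneg fun u v => (hP u v).1)
  have hτ0 : 0 < τ := by linarith
  set m : ℕ := ⌊n / τ⌋₊ + 1
  have hnm : n ≤ m * τ := by
    have hfloor : n / τ < m := by simpa [m] using Nat.lt_floor_add_one (n / τ)
    exact ((div_lt_iff₀ hτ0).1 hfloor).le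
  have hevent : {A : Adj n | n / τ < (highDegree A τ).card} =
      {A | m ≤ (highDegree A τ).card} := by
    ext A
    exact (Nat.floor_lt (div_nonneg n.cast_nonneg hτ0.le)).symm
  -- The exponents add up to `m τ (1/3 + 1/6 - 1)`; the `1/6` is `8 / 48`.
  calc prob P {A | n / τ < (highDegree A τ).card}
      ≤ n.choose m * Real.exp (m * (Real.exp 2 * (n * pmax P) - τ)) := by
        simpa [hevent] using prob_le_card_highDegree_le (t := 1) hP zero_le_one m τ
    _ ≤ Real.exp (m * τ / 3) * Real.exp (m * (τ / 6 - τ)) := by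
        gcongr
        · exact choose_le_exp_mul_div_three (by linarith) hnm
        · nlinarith [exp_two_le_eight]
    _ = Real.exp (-(1 / 2) * (m * τ)) := by
        rw [← Real.exp_add]
        ring_nf
    _ ≤ Real.exp (-(1 / 2) * n) := by
        rw [Real.exp_le_exp]
        linarith

/-- Lemma 8 (few nodes have degree above `τ`). -/
theorem statement_17 :
    ∃ C C' : ℝ, 0 < C ∧ 0 < C' ∧
      ∀ (n : ℕ) (P : Matrix (Fin n) (Fin n) ℝ),
        (∀ u v, P u v = P v u) → (∀ u v, 0 ≤ P u v ∧ P u v ≤ 1) →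
        ∀ τ : ℝ, C * (1 + (n : ℝ) * pmax P) < τ →
        1 - Real.exp (-C' * n) ≤ prob P
          { A | ((Finset.univ.filter fun u => τ ≤ degree A u).card : ℝ) ≤
              (n : ℝ) / τ } := by
  refine ⟨48, 1 / 2, by norm_num, by norm_num, fun n P _ hP τ hτ => ?_⟩
  rw [prob_eq_one_sub_prob_compl]
  gcongr
  simpa only [Set.compl_ofPred, not_le] using prob_card_highDegree_gt_le hP hτ

end SBM
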